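/- (Upper bound for the reaction terms of the evolution of |A⁻|², flat-ambient case.) One has Σ_{α,β=1}^{k} (tr(A_α A_β))² + Σ_{α,β=1}^{k} ‖A_α A_β − A_β A_α‖² + Σ_{β=1}^{k} ‖h̊ A_β − A_β h̊‖² ≤ (3/2)|A⁻|⁴ + 2|h̊|²|A⁻|². -/

import Mathlib

/-!
The commutator terms with `h̊` and the terms in the `A_α` alone are estimated separately; both
estimates come from one inequality (`sum_frobSq_commutator_le`): if symmetric matrices `B_β` are
pairwise orthogonal for the trace form and `‖B_β‖² ≤ M`, then for symmetric `A`
`Σ_β ‖[A, B_β]‖² ≤ ‖A‖² (Σ_β ‖B_β‖² + M)`.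

To see this, diagonalise `A` with eigenvalues `l_i` and put `L = Σ l_i² = ‖A‖²`. Then the left side
is `Σ_{i,j} (l_i - l_j)² w_{ij}` with `w_{ij} = Σ_β (B_β)_{ij}²`. Bessel's inequality gives
`2 w_{ij} ≤ M` off the diagonal, so it suffices that the positive parts of `(l_i - l_j)² - L` add
up to at most `2 L` (`sum_posPart_le`). The pairs where this quantity is positive pairwise
intersect and contain no triangle, hence they all contain one index `p` (`exists_center`), and
the sum over a star is controlled by Cauchy-Schwarz (`star_sum_le`).

With a single `B` this reads `‖[A, B]‖² ≤ 2 ‖A‖² ‖B‖²`, which handles the terms with `h̊`. For the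
remaining terms, an orthogonal change of the family `A_1, …, A_k` leaves every sum unchanged and
makes the matrix `tr(A_α A_β)` diagonal. Let `a_α = ‖A_α‖²`, with `a_p` maximal, and
`R = Σ_{α ≠ p} a_α`. The inequality with `M = R` for `α = p` and `M = a_p` for the other `α` bounds
the two sums by `(a_p + R)² + 2 a_p R`, and `2 a_p R ≤ (a_p + R)² / 2`.
-/

open Finset

/-- Squared Frobenius norm of a real matrix. -/
def frobSq {m : ℕ} (M : Matrix (Fin m) (Fin m) ℝ) : ℝ := ∑ i, ∑ j, (M i j) ^ 2

open Matrix

/-! ### Orthogonal conjugation and diagonalisation -/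

lemma frobSq_nonneg {m : ℕ} (M : Matrix (Fin m) (Fin m) ℝ) : 0 ≤ frobSq M :=
  Finset.sum_nonneg fun _ _ => Finset.sum_nonneg fun _ _ => sq_nonneg _

lemma frobSq_eq_trace {m : ℕ} (M : Matrix (Fin m) (Fin m) ℝ) :
    frobSq M = trace (M * Mᵀ) := by
  simp [frobSq, trace, mul_apply, sq]

lemma frobSq_conj {m : ℕ} {V : Matrix (Fin m) (Fin m) ℝ} (h1 : V * Vᵀ = 1)
    (M : Matrix (Fin m) (Fin m) ℝ) : frobSq (Vᵀ * M * V) = frobSq M := by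
  rw [frobSq_eq_trace, frobSq_eq_trace]
  have : Vᵀ * M * V * (Vᵀ * M * V)ᵀ = Vᵀ * (M * Mᵀ * V) := by
    simp only [transpose_mul, transpose_transpose]
    calc _ = Vᵀ * M * (V * Vᵀ) * Mᵀ * V := by simp only [Matrix.mul_assoc]
      _ = _ := by rw [h1]; simp only [Matrix.mul_assoc, Matrix.one_mul]
  rw [this, trace_mul_comm, Matrix.mul_assoc, h1, Matrix.mul_one]

lemma exists_diag {m : ℕ} (A : Matrix (Fin m) (Fin m) ℝ) (hA : A.IsSymm) :
    ∃ (V : Matrix (Fin m) (Fin m) ℝ) (d : Fin m → ℝ),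
      V * Vᵀ = 1 ∧ Vᵀ * V = 1 ∧ Vᵀ * A * V = diagonal d := by
  have hH : A.IsHermitian := by
    rw [Matrix.IsHermitian, conjTranspose_eq_transpose_of_trivial]; exact hA
  have h1 : (hH.eigenvectorUnitary : Matrix (Fin m) (Fin m) ℝ)
      * (hH.eigenvectorUnitary : Matrix (Fin m) (Fin m) ℝ)ᵀ = 1 := by
    have := Unitary.coe_mul_star_self hH.eigenvectorUnitary
    rwa [Unitary.coe_star, star_eq_conjTranspose,
      conjTranspose_eq_transpose_of_trivial] at this
  have h2 := mul_eq_one_comm.mp h1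
  refine ⟨hH.eigenvectorUnitary, hH.eigenvalues, h1, h2, ?_⟩
  have := hH.spectral_theorem
  rw [Unitary.conjStarAlgAut_apply, star_eq_conjTranspose,
    conjTranspose_eq_transpose_of_trivial] at this
  generalize (hH.eigenvectorUnitary : Matrix (Fin m) (Fin m) ℝ) = V at *
  generalize hH.eigenvalues = d at *
  rw [this]
  calc _ = (Vᵀ * V) * diagonal (RCLike.ofReal ∘ d) * (Vᵀ * V) := by
        simp only [Matrix.mul_assoc]
    _ = _ := by rw [h2]; simp

/-! ### Large eigenvalue gaps -/

lemma four_sq_le {m : ℕ} (l : Fin m → ℝ) {i j a b : Fin m} (hij : i ≠ j) (hab : a ≠ b)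
    (hia : i ≠ a) (hib : i ≠ b) (hja : j ≠ a) (hjb : j ≠ b) :
    l i ^ 2 + l j ^ 2 + l a ^ 2 + l b ^ 2 ≤ ∑ x, l x ^ 2 := by
  have := Finset.sum_le_sum_of_subset_of_nonneg (Finset.subset_univ ({i, j, a, b} : Finset (Fin m)))
    (f := fun x => l x ^ 2) (fun x _ _ => sq_nonneg _)
  rw [Finset.sum_insert (by simp [*]), Finset.sum_insert (by simp [*]),
    Finset.sum_insert (by simp [*]), Finset.sum_singleton] at this
  linarith

lemma two_sq_le {m : ℕ} (l : Fin m → ℝ) {i j : Fin m} (hij : i ≠ j) :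
    l i ^ 2 + l j ^ 2 ≤ ∑ x, l x ^ 2 := by
  have := Finset.sum_le_sum_of_subset_of_nonneg (Finset.subset_univ ({i, j} : Finset (Fin m)))
    (f := fun x => l x ^ 2) (fun x _ _ => sq_nonneg _)
  rwa [Finset.sum_pair hij] at this

/-- The pairs `{i, j}` with `(l i - l j)² > Σ l²` form a star: two disjoint such pairs would give
`2 Σ l² < Σ l² + Σ l²`, and each such pair has `l i * l j < 0`, which excludes triangles. -/
lemma exists_center {m : ℕ} (q : Fin m) (l : Fin m → ℝ) :
    ∃ p, ∀ i j, ∑ x, l x ^ 2 < (l i - l j) ^ 2 → i = p ∨ j = p := by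
  have hL : 0 ≤ ∑ x, l x ^ 2 := Finset.sum_nonneg fun _ _ => sq_nonneg _
  have hne : ∀ {i j}, ∑ x, l x ^ 2 < (l i - l j) ^ 2 → i ≠ j := by
    rintro i j h rfl
    simp at h
    linarith
  have hneg : ∀ {i j}, ∑ x, l x ^ 2 < (l i - l j) ^ 2 → l i * l j < 0 := by
    intro i j h
    have := two_sq_le l (hne h)
    nlinarith
  have hsymm : ∀ {i j}, ∑ x, l x ^ 2 < (l i - l j) ^ 2 → ∑ x, l x ^ 2 < (l j - l i) ^ 2 := by
    intro i j h
    linarith [sub_sq_comm (l i) (l j)]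
  have hmeet : ∀ {i j a b}, ∑ x, l x ^ 2 < (l i - l j) ^ 2 → ∑ x, l x ^ 2 < (l a - l b) ^ 2 →
      i = a ∨ i = b ∨ j = a ∨ j = b := by
    intro i j a b h1 h2
    by_contra! hc
    have := four_sq_le l (hne h1) (hne h2) hc.1 hc.2.1 hc.2.2.1 hc.2.2.2
    nlinarith [sq_nonneg (l i + l j), sq_nonneg (l a + l b)]
  have htri : ∀ {a b c}, ∑ x, l x ^ 2 < (l a - l b) ^ 2 → ∑ x, l x ^ 2 < (l b - l c) ^ 2 →
      ∑ x, l x ^ 2 < (l a - l c) ^ 2 → False := by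
    intro a b c h1 h2 h3
    have := mul_pos_of_neg_of_neg (hneg h1) (hneg h2)
    have := mul_neg_of_pos_of_neg this (hneg h3)
    nlinarith [sq_nonneg (l a * l b * l c)]
  -- Two pairs `{a, b}` and `{b, c}` force the centre `b`.
  have hpath : ∀ {a b c}, a ≠ c → ∑ x, l x ^ 2 < (l a - l b) ^ 2 →
      ∑ x, l x ^ 2 < (l b - l c) ^ 2 →
      ∀ i j, ∑ x, l x ^ 2 < (l i - l j) ^ 2 → i = b ∨ j = b := by
    intro a b c hac h1 h2 i j h
    by_contra! hc
    have e1 := hmeet h1 h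
    have e2 := hmeet h2 h
    have e3 := hne h
    have : (i = a ∧ j = c) ∨ (i = c ∧ j = a) := by grind
    rcases this with ⟨rfl, rfl⟩ | ⟨rfl, rfl⟩
    · exact htri h1 h2 h
    · exact htri h1 h2 (hsymm h)
  by_cases hE : ∃ a b, ∑ x, l x ^ 2 < (l a - l b) ^ 2
  · obtain ⟨a, b, hab⟩ := hE
    by_cases ha : ∀ i j, ∑ x, l x ^ 2 < (l i - l j) ^ 2 → i = a ∨ j = a
    · exact ⟨a, ha⟩
    · push Not at ha
      obtain ⟨c, d, hcd, hca, hda⟩ := ha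
      refine ⟨b, ?_⟩
      rcases hmeet hab hcd with h | h | h | h
      · exact absurd h.symm hca
      · exact absurd h.symm hda
      · subst h; exact hpath hda.symm hab hcd
      · subst h; exact hpath hca.symm hab (hsymm hcd)
  · push Not at hE
    exact ⟨q, fun i j h => absurd h (not_lt.mpr (hE i j))⟩

/-- With `J` the set of `j` that contribute, the bound is
`Σ_{j ∈ J} (l p - l j)² ≤ (|J| + 1) Σ l²`, a form of the Cauchy-Schwarz inequality. -/
lemma star_sum_le {m : ℕ} (l : Fin m → ℝ) (p : Fin m) :
    ∑ j, max 0 ((l p - l j) ^ 2 - ∑ x, l x ^ 2) ≤ ∑ x, l x ^ 2 := by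
  set L := ∑ x, l x ^ 2 with hLdef
  have hL : 0 ≤ L := Finset.sum_nonneg fun _ _ => sq_nonneg _
  let J : Finset (Fin m) := Finset.univ.filter fun j => 0 < (l p - l j) ^ 2 - L
  have hpJ : p ∉ J := by simp [J, hL]
  have e : ∑ j, max 0 ((l p - l j) ^ 2 - L) = ∑ j ∈ J, ((l p - l j) ^ 2 - L) := by
    rw [Finset.sum_filter]
    refine Finset.sum_congr rfl fun j _ => ?_
    split_ifs with hj
    · exact max_eq_right hj.le
    · exact max_eq_left (not_lt.mp hj)
  have e2 : ∑ j ∈ J, ((l p - l j) ^ 2 - L)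
      = J.card * l p ^ 2 - 2 * l p * ∑ j ∈ J, l j + ∑ j ∈ J, l j ^ 2 - J.card * L := by
    simp only [sub_sq, Finset.sum_sub_distrib, Finset.sum_add_distrib, Finset.sum_const,
      nsmul_eq_mul, Finset.mul_sum]
  have hsub : l p ^ 2 + ∑ j ∈ J, l j ^ 2 ≤ L := by
    rw [← Finset.sum_insert (f := fun j => l j ^ 2) hpJ]
    exact Finset.sum_le_sum_of_subset_of_nonneg (Finset.subset_univ _) fun _ _ _ => sq_nonneg _
  have hcs : (∑ j ∈ J, l j) ^ 2 ≤ J.card * ∑ j ∈ J, l j ^ 2 := sq_sum_le_card_mul_sum_sq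
  rw [e, e2]
  have hc : (0 : ℝ) ≤ J.card := Nat.cast_nonneg _
  nlinarith [mul_le_mul_of_nonneg_left hsub hc, sq_nonneg (l p + ∑ j ∈ J, l j)]

lemma sum_posPart_le {m : ℕ} (l : Fin m → ℝ) :
    ∑ i, ∑ j, max 0 ((l i - l j) ^ 2 - ∑ x, l x ^ 2) ≤ 2 * ∑ x, l x ^ 2 := by
  rcases Nat.eq_zero_or_pos m with rfl | hm
  · simp
  obtain ⟨p, hp⟩ := exists_center ⟨0, hm⟩ l
  have hs := star_sum_le l p
  set L := ∑ x, l x ^ 2 with hLdef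
  have key : ∀ i j, max 0 ((l i - l j) ^ 2 - L) ≤
      (if i = p then max 0 ((l p - l j) ^ 2 - L) else 0)
        + (if j = p then max 0 ((l p - l i) ^ 2 - L) else 0) := by
    intro i j
    have h1 := le_max_left 0 ((l p - l j) ^ 2 - L)
    have h2 := le_max_left 0 ((l p - l i) ^ 2 - L)
    by_cases hi : i = p
    · subst hi
      rw [if_pos rfl]
      split_ifs <;> linarith
    · by_cases hj : j = p
      · subst hj
        rw [if_neg hi, if_pos rfl, sub_sq_comm, zero_add]
      · rw [if_neg hi, if_neg hj, add_zero]
        refine max_le le_rfl ?_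
        by_contra! hc
        rcases hp i j (by linarith) with h | h
        · exact hi h
        · exact hj h
  calc _ ≤ ∑ i, ∑ j, ((if i = p then max 0 ((l p - l j) ^ 2 - L) else 0)
        + (if j = p then max 0 ((l p - l i) ^ 2 - L) else 0)) :=
        Finset.sum_le_sum fun i _ => Finset.sum_le_sum fun j _ => key i j
    _ = 2 * ∑ j, max 0 ((l p - l j) ^ 2 - L) := by
        simp only [Finset.sum_add_distrib]
        rw [Finset.sum_comm]
        simp
        ring
    _ ≤ _ := by linarith

/-! ### Commutators with an orthogonal family -/

/-- Bessel's inequality for the orthogonal family `B`, tested against the symmetric matrix with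
entries `1` at `(i, j)` and `(j, i)` and `0` elsewhere. -/
lemma bessel_entry {m : ℕ} {ι : Type*} [DecidableEq ι] (s : Finset ι)
    (B : ι → Matrix (Fin m) (Fin m) ℝ)
    (hB : ∀ β ∈ s, (B β).IsSymm) (horth : ∀ α ∈ s, ∀ β ∈ s, α ≠ β → trace (B α * B β) = 0)
    {M : ℝ} (hM0 : 0 ≤ M) (hM : ∀ β ∈ s, frobSq (B β) ≤ M) {i j : Fin m} (hij : i ≠ j) :
    2 * ∑ β ∈ s, (B β i j) ^ 2 ≤ M := by
  set X := ∑ β ∈ s, (B β i j) ^ 2 with hX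
  have hX0 : 0 ≤ X := Finset.sum_nonneg fun _ _ => sq_nonneg _
  -- `‖T‖² ≤ X M` by orthogonality, while its two entries equal to `X` give `2 X² ≤ ‖T‖²`.
  let T : Matrix (Fin m) (Fin m) ℝ := ∑ β ∈ s, B β i j • B β
  have hTij : T i j = X := by
    simp [T, Matrix.sum_apply, hX, sq]
  have hTji : T j i = X := by
    simp only [T, Matrix.sum_apply, hX, sq, Matrix.smul_apply, smul_eq_mul]
    exact Finset.sum_congr rfl fun β hβ => by rw [(hB β hβ).apply]
  have hlow : T i j ^ 2 + T j i ^ 2 ≤ frobSq T := by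
    have h1 : ∀ a b, T a b ^ 2 ≤ ∑ y, T a y ^ 2 := fun a b =>
      Finset.single_le_sum (f := fun y => T a y ^ 2) (fun _ _ => sq_nonneg _) (Finset.mem_univ b)
    have h2 := Finset.sum_le_sum_of_subset_of_nonneg
      (Finset.subset_univ ({i, j} : Finset (Fin m)))
      (f := fun x => ∑ y, T x y ^ 2) (fun x _ _ => Finset.sum_nonneg fun _ _ => sq_nonneg _)
    rw [Finset.sum_pair hij] at h2
    unfold frobSq
    linarith [h1 i j, h1 j i]
  have hTnorm : frobSq T = ∑ β ∈ s, (B β i j) ^ 2 * frobSq (B β) := by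
    rw [frobSq_eq_trace]
    simp only [T, Matrix.transpose_sum, Matrix.transpose_smul, Finset.sum_mul, Finset.mul_sum,
      trace_sum, smul_mul_smul_comm, trace_smul, smul_eq_mul]
    refine Finset.sum_congr rfl fun β hβ => ?_
    rw [Finset.sum_eq_single_of_mem β hβ, frobSq_eq_trace, sq]
    intro γ hγ hne
    rw [(hB _ ‹_›).eq]
    rw [horth _ hγ _ hβ hne, mul_zero]
  have hup : frobSq T ≤ X * M := by
    rw [hTnorm, hX, Finset.sum_mul]
    exact Finset.sum_le_sum fun β hβ => mul_le_mul_of_nonneg_left (hM β hβ) (sq_nonneg _)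
  rw [hTij, hTji] at hlow
  rcases hX0.eq_or_lt with h0 | h0
  · rw [← h0]; simpa using hM0
  · nlinarith

lemma sum_frobSq_commutator_diag_le {m : ℕ} {ι : Type*} [DecidableEq ι] (s : Finset ι)
    (l : Fin m → ℝ) (B : ι → Matrix (Fin m) (Fin m) ℝ)
    (hB : ∀ β ∈ s, (B β).IsSymm) (horth : ∀ α ∈ s, ∀ β ∈ s, α ≠ β → trace (B α * B β) = 0)
    {M : ℝ} (hM0 : 0 ≤ M) (hM : ∀ β ∈ s, frobSq (B β) ≤ M) :
    ∑ β ∈ s, frobSq (diagonal l * B β - B β * diagonal l)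
      ≤ (∑ x, l x ^ 2) * (∑ β ∈ s, frobSq (B β) + M) := by
  have hpos := sum_posPart_le l
  set L := ∑ x, l x ^ 2 with hLdef
  have hL : 0 ≤ L := Finset.sum_nonneg fun _ _ => sq_nonneg _
  have e1 : ∑ β ∈ s, frobSq (diagonal l * B β - B β * diagonal l)
      = ∑ i, ∑ j, (l i - l j) ^ 2 * ∑ β ∈ s, (B β i j) ^ 2 := by
    unfold frobSq
    rw [Finset.sum_comm]
    refine Finset.sum_congr rfl fun i _ => ?_
    rw [Finset.sum_comm]
    refine Finset.sum_congr rfl fun j _ => ?_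
    rw [Finset.mul_sum]
    refine Finset.sum_congr rfl fun β _ => ?_
    rw [Matrix.sub_apply, diagonal_mul, mul_diagonal]
    ring
  have e2 : ∑ β ∈ s, frobSq (B β) = ∑ i, ∑ j, ∑ β ∈ s, (B β i j) ^ 2 := by
    unfold frobSq
    rw [Finset.sum_comm]
    refine Finset.sum_congr rfl fun i _ => ?_
    rw [Finset.sum_comm]
  have key : ∀ i j, (l i - l j) ^ 2 * ∑ β ∈ s, (B β i j) ^ 2 ≤
      L * ∑ β ∈ s, (B β i j) ^ 2 + max 0 ((l i - l j) ^ 2 - L) * (M / 2) := by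
    intro i j
    have hw : 0 ≤ ∑ β ∈ s, (B β i j) ^ 2 := Finset.sum_nonneg fun _ _ => sq_nonneg _
    have h1 := le_max_left 0 ((l i - l j) ^ 2 - L)
    have h2 := le_max_right 0 ((l i - l j) ^ 2 - L)
    by_cases hij : i = j
    · subst hij
      have := mul_nonneg hL hw
      have := mul_nonneg h1 hM0
      rw [sub_self] at *
      rw [zero_pow two_ne_zero, zero_mul]
      rw [zero_pow two_ne_zero] at *
      linarith
    · have hb := bessel_entry s B hB horth hM0 hM hij
      have h3 := mul_le_mul_of_nonneg_right h2 hw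
      have h4 := mul_le_mul_of_nonneg_left hb h1
      linarith
  rw [e1, e2]
  calc _ ≤ ∑ i, ∑ j, (L * ∑ β ∈ s, (B β i j) ^ 2 + max 0 ((l i - l j) ^ 2 - L) * (M / 2)) :=
        Finset.sum_le_sum fun i _ => Finset.sum_le_sum fun j _ => key i j
    _ = L * (∑ i, ∑ j, ∑ β ∈ s, (B β i j) ^ 2)
        + (∑ i, ∑ j, max 0 ((l i - l j) ^ 2 - L)) * (M / 2) := by
        simp only [Finset.sum_add_distrib, Finset.mul_sum, Finset.sum_mul]
    _ ≤ _ := by nlinarith [mul_le_mul_of_nonneg_right hpos hM0]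

/-- Bound for the commutators of a symmetric matrix with an orthogonal family. Adding up the bounds
`‖[A, B_β]‖² ≤ 2 ‖A‖² ‖B_β‖²` would give twice the sum on the right; orthogonality replaces the
second copy of the sum by `M`. -/
lemma sum_frobSq_commutator_le {m : ℕ} {ι : Type*} [DecidableEq ι] (s : Finset ι)
    (A : Matrix (Fin m) (Fin m) ℝ) (hA : A.IsSymm) (B : ι → Matrix (Fin m) (Fin m) ℝ)
    (hB : ∀ β ∈ s, (B β).IsSymm) (horth : ∀ α ∈ s, ∀ β ∈ s, α ≠ β → trace (B α * B β) = 0)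
    {M : ℝ} (hM0 : 0 ≤ M) (hM : ∀ β ∈ s, frobSq (B β) ≤ M) :
    ∑ β ∈ s, frobSq (A * B β - B β * A) ≤ frobSq A * (∑ β ∈ s, frobSq (B β) + M) := by
  obtain ⟨V, l, h1, h2, hd⟩ := exists_diag A hA
  have hmul : ∀ P Q : Matrix (Fin m) (Fin m) ℝ,
      (Vᵀ * P * V) * (Vᵀ * Q * V) = Vᵀ * (P * Q) * V := by
    intro P Q
    calc _ = Vᵀ * P * (V * Vᵀ) * Q * V := by simp only [Matrix.mul_assoc]
      _ = _ := by rw [h1]; simp only [Matrix.mul_assoc, Matrix.one_mul]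
  have htr : ∀ P : Matrix (Fin m) (Fin m) ℝ, trace (Vᵀ * P * V) = trace P := by
    intro P
    rw [trace_mul_comm, ← Matrix.mul_assoc, h1, Matrix.one_mul]
  have hA' : frobSq A = ∑ x, l x ^ 2 := by
    rw [← frobSq_conj h1, hd, frobSq_eq_trace]
    simp [sq, trace_diagonal]
  have := sum_frobSq_commutator_diag_le s l (fun β => Vᵀ * B β * V)
    (fun β hβ => by
      rw [Matrix.IsSymm]
      simp only [transpose_mul, transpose_transpose, (hB β hβ).eq, Matrix.mul_assoc])
    (fun α hα β hβ hne => by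
      rw [hmul, htr, horth α hα β hβ hne])
    hM0 (fun β hβ => by rw [frobSq_conj h1]; exact hM β hβ)
  simp only [frobSq_conj h1, ← hd, hmul, ← Matrix.sub_mul, ← Matrix.mul_sub] at this
  rwa [hA']

lemma frobSq_commutator_le {m : ℕ} (A B : Matrix (Fin m) (Fin m) ℝ)
    (hA : A.IsSymm) (hB : B.IsSymm) :
    frobSq (A * B - B * A) ≤ 2 * frobSq A * frobSq B := by
  have := sum_frobSq_commutator_le (Finset.univ : Finset Unit) A hA (fun _ => B)
    (fun _ _ => hB) (fun α _ β _ h => absurd rfl h) (frobSq_nonneg B) (fun _ _ => le_rfl)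
  simp only [Finset.univ_unique, Finset.sum_singleton] at this
  linarith

/-! ### The reaction terms -/

/-- The estimate for the terms in the `A_α` alone, for a family that is orthogonal for the trace
form. -/
lemma orthogonal_family_le {m k : ℕ} (hk : 1 ≤ k) (B : Fin k → Matrix (Fin m) (Fin m) ℝ)
    (hB : ∀ β, (B β).IsSymm) (horth : ∀ α β, α ≠ β → trace (B α * B β) = 0) :
    (∑ α, ∑ β, (trace (B α * B β)) ^ 2) + (∑ α, ∑ β, frobSq (B α * B β - B β * B α))
      ≤ (3 / 2) * (∑ β, frobSq (B β)) ^ 2 := by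
  have : Nonempty (Fin k) := ⟨⟨0, hk⟩⟩
  obtain ⟨p, hp⟩ := Finite.exists_max fun β => frobSq (B β)
  have hfr : ∀ β, trace (B β * B β) = frobSq (B β) := fun β => by
    rw [frobSq_eq_trace, (hB β).eq]
  have h0 : ∀ β, 0 ≤ frobSq (B β) := fun β => frobSq_nonneg _
  have e1 : ∑ α, ∑ β, (trace (B α * B β)) ^ 2 = ∑ α, frobSq (B α) ^ 2 := by
    refine Finset.sum_congr rfl fun α _ => ?_
    rw [Finset.sum_eq_single α, hfr]
    · intro β _ hne
      rw [horth α β hne.symm]; simp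
    · simp
  -- The bound for one row; the diagonal commutator vanishes.
  have hrow : ∀ α, ∀ M, 0 ≤ M → (∀ β, β ≠ α → frobSq (B β) ≤ M) →
      ∑ β, frobSq (B α * B β - B β * B α)
        ≤ frobSq (B α) * (∑ β, frobSq (B β) - frobSq (B α) + M) := by
    intro α M hM0 hM
    have := sum_frobSq_commutator_le (Finset.univ.erase α) (B α) (hB α) B (fun β _ => hB β)
      (fun a _ b _ h => horth a b h) hM0 (fun β hβ => hM β (Finset.ne_of_mem_erase hβ))
    rw [Finset.sum_erase_eq_sub (Finset.mem_univ α),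
      Finset.sum_erase_eq_sub (Finset.mem_univ α)] at this
    have hz : frobSq (B α * B α - B α * B α) = 0 := by simp [frobSq]
    linarith
  set S := ∑ β, frobSq (B β) with hS
  have hR : S - frobSq (B p) = ∑ β ∈ Finset.univ.erase p, frobSq (B β) := by
    rw [Finset.sum_erase_eq_sub (Finset.mem_univ p)]
  have hR0 : 0 ≤ S - frobSq (B p) := by
    rw [hR]; exact Finset.sum_nonneg fun β _ => h0 β
  have hrp := hrow p (S - frobSq (B p)) hR0 (fun β hβ => by
    rw [hR]
    exact Finset.single_le_sum (f := fun β => frobSq (B β)) (fun β _ => h0 β)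
      (Finset.mem_erase.mpr ⟨hβ, Finset.mem_univ β⟩))
  have hrest : ∑ α ∈ Finset.univ.erase p, ∑ β, frobSq (B α * B β - B β * B α)
      ≤ ∑ α ∈ Finset.univ.erase p, frobSq (B α) * (S - frobSq (B α) + frobSq (B p)) :=
    Finset.sum_le_sum fun α _ => hrow α _ (h0 p) fun β _ => hp β
  have e2 : ∑ α ∈ Finset.univ.erase p, frobSq (B α) * (S - frobSq (B α) + frobSq (B p))
      = (S - frobSq (B p)) * (S + frobSq (B p))
        - (∑ α, frobSq (B α) ^ 2 - frobSq (B p) ^ 2) := by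
    rw [hR, ← Finset.sum_erase_eq_sub (f := fun α => frobSq (B α) ^ 2) (Finset.mem_univ p),
      Finset.sum_mul, ← Finset.sum_sub_distrib]
    exact Finset.sum_congr rfl fun α _ => by ring
  rw [Finset.sum_erase_eq_sub (Finset.mem_univ p), e2] at hrest
  rw [e1]
  nlinarith [sq_nonneg (2 * frobSq (B p) - S)]

lemma conj_apply {k : ℕ} (U F : Matrix (Fin k) (Fin k) ℝ) (α β : Fin k) :
    (Uᵀ * F * U) α β = ∑ γ, ∑ δ, U γ α * U δ β * F γ δ := by
  simp only [mul_apply, transpose_apply, Finset.sum_mul]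
  rw [Finset.sum_comm]
  exact Finset.sum_congr rfl fun γ _ => Finset.sum_congr rfl fun δ _ => by ring

/-- **Upper bound for the reaction terms of the evolution of `|A⁻|²` (flat-ambient case).**
For a symmetric traceless matrix `h̊` and symmetric traceless matrices `A_1, …, A_k`,
`Σ_{α,β} (tr(A_α A_β))² + Σ_{α,β} ‖A_α A_β − A_β A_α‖² + Σ_β ‖h̊ A_β − A_β h̊‖²
≤ (3/2)|A⁻|⁴ + 2|h̊|²|A⁻|²`, where `|A⁻|² = Σ_β ‖A_β‖²` and `|h̊|² = ‖h̊‖²`. -/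
theorem Aminus_reaction_upper_bound
    (m k : ℕ) (hm : 1 ≤ m) (hk : 1 ≤ k)
    (h : Matrix (Fin m) (Fin m) ℝ) (hh : h.IsSymm) (hhtr : h.trace = 0)
    (A : Fin k → Matrix (Fin m) (Fin m) ℝ)
    (hA : ∀ α, (A α).IsSymm) (hAtr : ∀ α, (A α).trace = 0) :
    (∑ α, ∑ β, (Matrix.trace (A α * A β)) ^ 2)
      + (∑ α, ∑ β, frobSq (A α * A β - A β * A α))
      + (∑ β, frobSq (h * A β - A β * h))
      ≤ (3 / 2) * (∑ β, frobSq (A β)) ^ 2 + 2 * frobSq h * ∑ β, frobSq (A β) := by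
  have hlast : ∑ β, frobSq (h * A β - A β * h) ≤ 2 * frobSq h * ∑ β, frobSq (A β) := by
    rw [Finset.mul_sum]
    exact Finset.sum_le_sum fun β _ => frobSq_commutator_le h (A β) hh (hA β)
  let S : Matrix (Fin k) (Fin k) ℝ := Matrix.of fun α β => trace (A α * A β)
  have hS : S.IsSymm := by
    ext α β
    exact trace_mul_comm (A β) (A α)
  obtain ⟨U, d, h1, h2, hd⟩ := exists_diag S hS
  let B : Fin k → Matrix (Fin m) (Fin m) ℝ := fun α => ∑ γ, U γ α • A γ
  have hBmul : ∀ α β, B α * B β = ∑ γ, ∑ δ, (U γ α * U δ β) • (A γ * A δ) := by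
    intro α β
    simp only [B, Finset.sum_mul, Finset.mul_sum, smul_mul_smul_comm]
    rw [Finset.sum_comm]
  have hBsymm : ∀ β, (B β).IsSymm := by
    intro β
    rw [Matrix.IsSymm]
    simp only [B, transpose_sum, transpose_smul, (hA _).eq]
  have hBtr : ∀ α β, trace (B α * B β) = (Uᵀ * S * U) α β := by
    intro α β
    rw [hBmul, conj_apply]
    simp only [trace_sum, trace_smul, smul_eq_mul, S, of_apply]
  have hmain := orthogonal_family_le hk B hBsymm (fun α β hne => by
    rw [hBtr, hd, diagonal_apply_ne _ hne])
  have e1 : ∑ α, ∑ β, (trace (B α * B β)) ^ 2 = ∑ α, ∑ β, (trace (A α * A β)) ^ 2 := by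
    simp only [hBtr]
    exact frobSq_conj h1 S
  have e3 : ∑ β, frobSq (B β) = ∑ β, frobSq (A β) := by
    have t1 : ∑ β, frobSq (B β) = trace (Uᵀ * S * U) := by
      rw [trace]
      refine Finset.sum_congr rfl fun β _ => ?_
      rw [diag_apply, ← hBtr, frobSq_eq_trace, (hBsymm β).eq]
    rw [t1, trace_mul_comm, ← Matrix.mul_assoc, h1, Matrix.one_mul, trace]
    refine Finset.sum_congr rfl fun β _ => ?_
    rw [frobSq_eq_trace, (hA β).eq]
    rfl
  -- For fixed `(i, j)`, the `(i, j)` entries of the commutators form a `k × k` matrix which is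
  -- conjugated by `U`, so the sum of their squares is unchanged.
  have hswap : ∀ C : Fin k → Matrix (Fin m) (Fin m) ℝ,
      ∑ α, ∑ β, frobSq (C α * C β - C β * C α)
        = ∑ i, ∑ j, frobSq (Matrix.of fun α β => (C α * C β - C β * C α) i j) := by
    intro C
    unfold frobSq
    simp only [of_apply]
    calc _ = ∑ α, ∑ i, ∑ β, ∑ j, ((C α * C β - C β * C α) i j) ^ 2 :=
          Finset.sum_congr rfl fun α _ => Finset.sum_comm
      _ = ∑ i, ∑ α, ∑ β, ∑ j, ((C α * C β - C β * C α) i j) ^ 2 := Finset.sum_comm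
      _ = ∑ i, ∑ α, ∑ j, ∑ β, ((C α * C β - C β * C α) i j) ^ 2 :=
          Finset.sum_congr rfl fun i _ => Finset.sum_congr rfl fun α _ => Finset.sum_comm
      _ = _ := Finset.sum_congr rfl fun i _ => Finset.sum_comm
  have e2 : ∑ α, ∑ β, frobSq (B α * B β - B β * B α)
      = ∑ α, ∑ β, frobSq (A α * A β - A β * A α) := by
    rw [hswap, hswap]
    refine Finset.sum_congr rfl fun i _ => Finset.sum_congr rfl fun j _ => ?_
    rw [← frobSq_conj h1 (Matrix.of fun α β => (A α * A β - A β * A α) i j)]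
    congr 1
    ext α β
    have hcomm : B α * B β - B β * B α
        = ∑ γ, ∑ δ, (U γ α * U δ β) • (A γ * A δ - A δ * A γ) := by
      simp only [smul_sub, Finset.sum_sub_distrib]
      rw [hBmul, hBmul]
      congr 1
      rw [Finset.sum_comm]
      exact Finset.sum_congr rfl fun γ _ => Finset.sum_congr rfl fun δ _ => by rw [mul_comm]
    rw [conj_apply, of_apply, hcomm]
    simp only [Matrix.sum_apply, Matrix.smul_apply, smul_eq_mul, of_apply]
  rw [e1, e2, e3] at hmain
  linarith
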